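/- Let 𝕀 be a Schur ideal of positive semidefinite k×k complex matrices that is non-trivial (for each i = 1,...,k there exists P ∈ 𝕀 with pᵢᵢ ≠ 0) and bounded (there exists δ > 0 such that P ≥ δ²·Diag(P) in the Loewner order for all P ∈ 𝕀, where Diag(P) is the diagonal matrix with P's diagonal entries). Then there exist a complex Hilbert space H and bounded operators E₁,...,E_k on H with EᵢEⱼ = δᵢⱼEᵢ and E₁+⋯+E_k = I, such that {w ∈ ℂ^k : ‖w₁E₁+⋯+w_kE_k‖ ≤ 1} = 𝕀^⊥. -/

import Mathlib

open scoped ComplexOrder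

/-- A bundled complex Hilbert space. -/
structure CplxHilbertSpace where
  carrier : Type
  [ng : NormedAddCommGroup carrier]
  [ip : InnerProductSpace ℂ carrier]
  [cs : CompleteSpace carrier]

attribute [instance] CplxHilbertSpace.ng CplxHilbertSpace.ip CplxHilbertSpace.cs

open scoped MatrixOrder in
lemma aux_norm_le_one_iff {k : ℕ} (M : Matrix (Fin k) (Fin k) ℂ) :
    ‖Matrix.toEuclideanCLM (n := Fin k) (𝕜 := ℂ) M‖ ≤ 1 ↔
      (1 - M.conjTranspose * M).PosSemidef := by
  set T := Matrix.toEuclideanCLM (n := Fin k) (𝕜 := ℂ) M with hT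
  have key : ∀ x : Fin k → ℂ, star x ⬝ᵥ ((1 - M.conjTranspose * M).mulVec x) =
      ((‖(WithLp.toLp 2 x : EuclideanSpace ℂ (Fin k))‖ ^ 2
        - ‖T (WithLp.toLp 2 x)‖ ^ 2 : ℝ) : ℂ) := by
    intro x
    have h : ∀ y : Fin k → ℂ, star y ⬝ᵥ y =
        ((‖(WithLp.toLp 2 y : EuclideanSpace ℂ (Fin k))‖ ^ 2 : ℝ) : ℂ) := by
      intro y
      rw [EuclideanSpace.norm_sq_eq]
      simp only [dotProduct, Pi.star_apply, RCLike.star_def]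
      push_cast
      refine Finset.sum_congr rfl fun i _ => ?_
      rw [mul_comm, Complex.mul_conj, Complex.normSq_eq_norm_sq]
      push_cast
      rfl
    rw [hT, Matrix.toEuclideanCLM_toLp, Complex.ofReal_sub, ← h, ← h, Matrix.sub_mulVec,
      dotProduct_sub, Matrix.one_mulVec, ← Matrix.mulVec_mulVec, Matrix.dotProduct_mulVec,
      Matrix.vecMul_conjTranspose, star_star]
  rw [Matrix.posSemidef_iff_dotProduct_mulVec]
  constructor
  · intro h
    refine ⟨Matrix.isHermitian_one.sub (Matrix.isHermitian_conjTranspose_mul_self M), fun x => ?_⟩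
    rw [key]
    have h1 := T.le_of_opNorm_le h (WithLp.toLp 2 x)
    rw [one_mul] at h1
    have : 0 ≤ ‖(WithLp.toLp 2 x : EuclideanSpace ℂ (Fin k))‖ ^ 2 - ‖T (WithLp.toLp 2 x)‖ ^ 2 := by
      have := pow_le_pow_left₀ (norm_nonneg _) h1 2
      linarith
    exact_mod_cast this
  · rintro ⟨-, h⟩
    refine T.opNorm_le_bound zero_le_one fun x => ?_
    have h1 := h (WithLp.ofLp x)
    rw [key] at h1
    have h2 : 0 ≤ ‖x‖ ^ 2 - ‖T x‖ ^ 2 := by exact_mod_cast h1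
    rw [one_mul]
    exact le_of_sq_le_sq (by linarith) (norm_nonneg _)

open scoped MatrixOrder in
lemma aux_local {k : ℕ} (P : Matrix (Fin k) (Fin k) ℂ) (hP : P.PosDef) :
    ∃ A : Fin k → EuclideanSpace ℂ (Fin k) →L[ℂ] EuclideanSpace ℂ (Fin k),
      (∀ i j, A i * A j = if i = j then A i else 0) ∧ (∑ i, A i = 1) ∧
      ∀ w : Fin k → ℂ, ‖∑ i, w i • A i‖ ≤ 1 ↔
        (Matrix.of fun i j => (1 - (starRingEnd ℂ) (w i) * w j) * P i j).PosSemidef := by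
  obtain ⟨B, hB⟩ := CStarAlgebra.nonneg_iff_eq_star_mul_self.mp hP.posSemidef.nonneg
  have hBu : IsUnit B := by
    have := hP.isUnit
    rw [hB, Matrix.isUnit_iff_isUnit_det, Matrix.det_mul] at this
    rw [Matrix.isUnit_iff_isUnit_det]
    exact isUnit_of_mul_isUnit_right this
  have hBd := (Matrix.isUnit_iff_isUnit_det B).1 hBu
  have e1 : B⁻¹ * B = 1 := Matrix.nonsing_inv_mul B hBd
  have e2 : B * B⁻¹ = 1 := Matrix.mul_nonsing_inv B hBd
  have hw : ∀ w : Fin k → ℂ, ∑ i, w i • Matrix.toEuclideanCLM (n := Fin k) (𝕜 := ℂ)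
      (B * Matrix.diagonal (Pi.single i 1) * B⁻¹) =
      Matrix.toEuclideanCLM (n := Fin k) (𝕜 := ℂ) (B * Matrix.diagonal w * B⁻¹) := by
    intro w
    have : Matrix.diagonal w = ∑ i, w i • Matrix.diagonal (Pi.single i (1 : ℂ)) := by
      ext a b
      rw [Matrix.sum_apply]
      by_cases hab : a = b
      · subst hab
        simp [Pi.single_apply]
      · simp [hab]
    rw [this, Finset.mul_sum, Finset.sum_mul, map_sum]
    refine Finset.sum_congr rfl fun i _ => ?_
    rw [← map_smul]
    simp
  refine ⟨fun i => Matrix.toEuclideanCLM (n := Fin k) (𝕜 := ℂ)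
      (B * Matrix.diagonal (Pi.single i 1) * B⁻¹), ?_, ?_, ?_⟩
  · intro i j
    rw [← map_mul]
    have : B * Matrix.diagonal (Pi.single i (1 : ℂ)) * B⁻¹ *
        (B * Matrix.diagonal (Pi.single j 1) * B⁻¹) =
        B * (Matrix.diagonal (Pi.single i 1) * Matrix.diagonal (Pi.single j 1)) * B⁻¹ := by
      calc _ = B * Matrix.diagonal (Pi.single i (1 : ℂ)) * (B⁻¹ * B) *
            Matrix.diagonal (Pi.single j 1) * B⁻¹ := by simp only [Matrix.mul_assoc]
        _ = _ := by rw [e1]; simp only [Matrix.mul_assoc, Matrix.one_mul]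
    rw [this, Matrix.diagonal_mul_diagonal]
    split_ifs with hij
    · subst hij
      congr 4
      ext a
      by_cases h : a = i <;> simp [Pi.single_apply, h]
    · have : (fun a => (Pi.single i (1 : ℂ) : Fin k → ℂ) a * (Pi.single j (1 : ℂ) : Fin k → ℂ) a)
          = 0 := by
        ext a
        by_cases h : a = i
        · subst h; simp [hij]
        · simp [h]
      rw [this]
      simp
  · have := hw 1
    simp only [Pi.one_apply, one_smul] at this
    rw [this]
    have h1 : Matrix.diagonal (1 : Fin k → ℂ) = 1 := Matrix.diagonal_one
    rw [h1, Matrix.mul_one, e2, map_one]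
  · intro w
    rw [hw, aux_norm_le_one_iff, ← Matrix.IsUnit.posSemidef_star_left_conjugate_iff hBu]
    have : star B * (1 - (B * Matrix.diagonal w * B⁻¹).conjTranspose *
        (B * Matrix.diagonal w * B⁻¹)) * B =
        Matrix.of fun i j => (1 - (starRingEnd ℂ) (w i) * w j) * P i j := by
      have h2 : (B * Matrix.diagonal w * B⁻¹) * B = B * Matrix.diagonal w := by
        rw [Matrix.mul_assoc, e1, Matrix.mul_one]
      have h3 : star B * (1 - (B * Matrix.diagonal w * B⁻¹).conjTranspose *
        (B * Matrix.diagonal w * B⁻¹)) * B = star B * B -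
          ((B * Matrix.diagonal w * B⁻¹) * B).conjTranspose *
          ((B * Matrix.diagonal w * B⁻¹) * B) := by
        rw [Matrix.conjTranspose_mul _ B, Matrix.star_eq_conjTranspose]
        simp only [Matrix.mul_sub, Matrix.sub_mul, Matrix.mul_assoc, Matrix.one_mul]
      rw [h3, h2, Matrix.conjTranspose_mul, Matrix.diagonal_conjTranspose]
      have h4 : Matrix.diagonal (star w) * B.conjTranspose * (B * Matrix.diagonal w) =
          Matrix.diagonal (star w) * P * Matrix.diagonal w := by
        rw [hB, Matrix.star_eq_conjTranspose]
        simp only [Matrix.mul_assoc]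
      rw [h4, ← hB]
      ext i j
      simp [Matrix.sub_apply, Matrix.mul_diagonal, Matrix.diagonal_mul]
      ring
    rw [this]

/-- Let `𝕀` be a Schur ideal of positive semidefinite `k×k` matrices that is
non-trivial and bounded.  Then there is a complex Hilbert space `H` and bounded
operators `E₁,...,E_k` on `H` with `EᵢEⱼ = δᵢⱼEᵢ` and `E₁+⋯+E_k = I`, such that
`{w ∈ ℂ^k : ‖w₁E₁+⋯+w_kE_k‖ ≤ 1} = 𝕀^⊥`. -/
theorem stmt13 (k : ℕ) (I : Set (Matrix (Fin k) (Fin k) ℂ))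
    (hpsd : ∀ P ∈ I, P.PosSemidef)
    (hadd : ∀ P ∈ I, ∀ Q ∈ I, P + Q ∈ I)
    (hschur : ∀ P ∈ I, ∀ Q : Matrix (Fin k) (Fin k) ℂ, Q.PosSemidef →
      Matrix.hadamard P Q ∈ I)
    (hnontrivial : ∀ i : Fin k, ∃ P ∈ I, P i i ≠ 0)
    (hbounded : ∃ δ : ℝ, 0 < δ ∧ ∀ P ∈ I,
      (P - ((δ : ℂ) ^ 2) • Matrix.diagonal (fun i => P i i)).PosSemidef) :
    ∃ (𝓗 : CplxHilbertSpace) (E : Fin k → 𝓗.carrier →L[ℂ] 𝓗.carrier),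
      (∀ i j, E i * E j = if i = j then E i else 0) ∧
      (∑ i, E i = 1) ∧
      {w : Fin k → ℂ | ‖∑ i, w i • E i‖ ≤ 1} =
        {w : Fin k → ℂ | ∀ P ∈ I,
          (Matrix.of fun i j => (1 - (starRingEnd ℂ) (w i) * w j) * P i j).PosSemidef} := by
  classical
  obtain ⟨δ, hδ, hb⟩ := hbounded
  -- positivity of scaled sums
  have hpos : ∀ P ∈ I, (∀ i, P i i ≠ 0) → P.PosDef := by
    intro P hPI hd
    have hD : (((δ : ℂ) ^ 2) • Matrix.diagonal (fun i => P i i)).PosDef := by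
      rw [← Matrix.diagonal_smul]
      refine Matrix.PosDef.diagonal fun i => ?_
      have h1 : 0 < P i i := lt_of_le_of_ne (hpsd P hPI).diag_nonneg (hd i).symm
      have h2 : (0 : ℂ) < (δ : ℂ) ^ 2 := by exact_mod_cast pow_pos hδ 2
      exact mul_pos h2 h1
    have := hD.add_posSemidef (hb P hPI)
    simpa using this
  have hscale : ∀ P ∈ I, ∀ c : ℝ, 0 ≤ c → (c : ℂ) • P ∈ I := by
    intro P hPI c hc
    have hQ : (Matrix.of fun _ _ : Fin k => (c : ℂ)).PosSemidef := by
      have := (Matrix.posSemidef_vecMulVec_self_star (fun _ : Fin k => (1 : ℂ))).smul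
        (a := (c : ℂ)) (by exact_mod_cast hc)
      convert this using 1
      ext i j
      simp [Matrix.vecMulVec_apply]
    convert hschur P hPI _ hQ using 1
    ext i j
    simp [mul_comm]
  have hP0 : I.Nonempty → ∃ P ∈ I, ∀ i, P i i ≠ 0 := by
    rintro ⟨Q, hQ⟩
    have : ∀ s : Finset (Fin k), ∃ P ∈ I, ∀ i ∈ s, P i i ≠ 0 := by
      intro s
      induction s using Finset.induction_on with
      | empty => exact ⟨Q, hQ, by simp⟩
      | insert a s _ ih =>
        obtain ⟨P, hPI, hP⟩ := ih
        obtain ⟨R, hRI, hR⟩ := hnontrivial a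
        have hp := fun i => (hpsd P hPI).diag_nonneg (i := i)
        have hr := fun i => (hpsd R hRI).diag_nonneg (i := i)
        refine ⟨P + R, hadd P hPI R hRI, fun i hi => ?_⟩
        rw [Matrix.add_apply]
        rcases Finset.mem_insert.1 hi with rfl | hi
        · exact (add_pos_of_nonneg_of_pos (hp i) (lt_of_le_of_ne (hr i) hR.symm)).ne'
        · exact (add_pos_of_pos_of_nonneg (lt_of_le_of_ne (hp i) (hP i hi).symm) (hr i)).ne'
    obtain ⟨P, hPI, hP⟩ := this Finset.univ
    exact ⟨P, hPI, fun i => hP i (Finset.mem_univ i)⟩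
  -- reduction to positive definite elements
  have hred : ∀ w : Fin k → ℂ, (∀ P ∈ I,
      (Matrix.of fun i j => (1 - (starRingEnd ℂ) (w i) * w j) * P i j).PosSemidef) ↔
      ∀ s : {P : Matrix (Fin k) (Fin k) ℂ // P ∈ I ∧ P.PosDef},
      (Matrix.of fun i j => (1 - (starRingEnd ℂ) (w i) * w j) * s.1 i j).PosSemidef := by
    intro w
    refine ⟨fun h s => h s.1 s.2.1, fun h P hPI => ?_⟩
    obtain ⟨P0, hP0I, hP0d⟩ := hP0 ⟨P, hPI⟩
    have hP0p := hpos P0 hP0I hP0d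
    have hn : ∀ n : ℕ, (Matrix.of fun i j => (1 - (starRingEnd ℂ) (w i) * w j) *
        (P + ((1 / ((n : ℝ) + 1) : ℝ) : ℂ) • P0) i j).PosSemidef := by
      intro n
      have hc : (0 : ℝ) < 1 / ((n : ℝ) + 1) := by positivity
      refine h ⟨P + ((1 / ((n : ℝ) + 1) : ℝ) : ℂ) • P0,
        hadd _ hPI _ (hscale _ hP0I _ hc.le), ?_⟩
      refine Matrix.PosDef.posSemidef_add (hpsd P hPI) (hP0p.smul ?_)
      exact_mod_cast hc
    rw [Matrix.posSemidef_iff_dotProduct_mulVec]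
    constructor
    · ext i j
      have := (hpsd P hPI).1.apply i j
      simp only [Matrix.conjTranspose_apply, Matrix.of_apply, star_mul', this]
      simp [mul_comm]
    · intro x
      have ht : Filter.Tendsto (fun n : ℕ => ((1 / ((n : ℝ) + 1) : ℝ) : ℂ)) Filter.atTop
          (nhds ((0 : ℝ) : ℂ)) :=
        (Complex.continuous_ofReal.tendsto 0).comp tendsto_one_div_add_atTop_nhds_zero_nat
      have hcont : Continuous fun c : ℂ => star x ⬝ᵥ ((Matrix.of fun i j =>
          (1 - (starRingEnd ℂ) (w i) * w j) * (P + c • P0) i j).mulVec x) := by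
        simp only [dotProduct, Matrix.mulVec, Matrix.of_apply, Matrix.add_apply, Matrix.smul_apply]
        fun_prop
      have hl := (hcont.tendsto ((0 : ℝ) : ℂ)).comp ht
      have := ge_of_tendsto' hl (fun n => (hn n).dotProduct_mulVec_nonneg x)
      simpa using this
  choose A hA1 hA2 hA3 using fun s : {P : Matrix (Fin k) (Fin k) ℂ // P ∈ I ∧ P.PosDef} =>
    aux_local s.1 s.2.2
  have hAb : ∀ i s, ‖A s i‖ ≤ δ⁻¹ := by
    intro i s
    have h1 := (hA3 s (Pi.single i (δ : ℂ))).2 (by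
      have hd := hb s.1 s.2.1
      have hD : (Matrix.diagonal (fun j => if j = i then 0 else
          ((δ : ℂ) ^ 2) * s.1 j j)).PosSemidef := by
        refine Matrix.PosSemidef.diagonal fun j => ?_
        have h1 : 0 ≤ s.1 j j := s.2.2.posSemidef.diag_nonneg
        have h2 : (0 : ℂ) ≤ (δ : ℂ) ^ 2 := by exact_mod_cast (pow_pos hδ 2).le
        show (0 : ℂ) ≤ if j = i then 0 else ((δ : ℂ) ^ 2) * s.1 j j
        split_ifs
        · exact le_rfl
        · exact mul_nonneg h2 h1
      convert hd.add hD using 1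
      ext a b
      by_cases hab : a = b
      · subst hab
        by_cases ha : a = i
        · subst ha
          simp
          ring
        · simp [ha]
      · by_cases ha : a = i
        · subst ha
          simp [hab, Ne.symm hab]
        · simp [hab, ha])
    have h2 : ∑ j, (Pi.single i (δ : ℂ) : Fin k → ℂ) j • A s j = (δ : ℂ) • A s i := by
      rw [Finset.sum_eq_single i]
      · simp
      · intro j _ hj
        rw [Pi.single_eq_of_ne hj]
        ext x : 1
        exact zero_smul ℂ (A s j x)
      · simp
    rw [h2, norm_smul, Complex.norm_real, Real.norm_of_nonneg hδ.le] at h1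
    rw [← one_div, le_div_iff₀ hδ, mul_comm]
    exact h1
  have hδ' : 0 ≤ δ⁻¹ := (inv_pos.2 hδ).le
  let E : Fin k → lp (fun _ : {P : Matrix (Fin k) (Fin k) ℂ // P ∈ I ∧ P.PosDef} =>
      EuclideanSpace ℂ (Fin k)) 2 →L[ℂ] lp (fun _ => EuclideanSpace ℂ (Fin k)) 2 :=
    fun i => lp.mapCLM 2 (fun s => A s i) hδ' (hAb i)
  have hE : ∀ i f s, (E i f) s = A s i (f s) := fun i f s => rfl
  have hsum : ∀ (w : Fin k → ℂ) f s, ((∑ i, w i • E i) f) s = (∑ i, w i • A s i) (f s) := by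
    intro w f s
    simp only [sum_apply, lp.coeFn_sum, Finset.sum_apply]
    rfl
  refine ⟨⟨lp (fun _ : {P : Matrix (Fin k) (Fin k) ℂ // P ∈ I ∧ P.PosDef} =>
      EuclideanSpace ℂ (Fin k)) 2⟩, E, ?_, ?_, ?_⟩
  · intro i j
    ext1 f
    apply lp.ext
    funext s
    show A s i (A s j (f s)) = _
    rw [← ContinuousLinearMap.mul_apply, hA1]
    split_ifs <;> rfl
  · have h1 : ∑ i, E i = ∑ i, (1 : Fin k → ℂ) i • E i := by simp
    refine h1.trans ?_
    ext1 f
    apply lp.ext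
    funext s
    refine (hsum 1 f s).trans ?_
    simp [hA2]
  · ext w
    rw [Set.mem_ofPred_eq, Set.mem_ofPred_eq, hred]
    simp only [← hA3]
    constructor
    · intro h s
      refine ContinuousLinearMap.opNorm_le_bound _ zero_le_one fun x => ?_
      have h1 := ContinuousLinearMap.le_of_opNorm_le _ h (lp.single 2 s x)
      have h2 := (lp.norm_apply_le_norm (by norm_num) ((∑ i, w i • E i) (lp.single 2 s x)) s)
      rw [hsum, lp.single_apply_self] at h2
      rw [lp.norm_single (by norm_num)] at h1
      exact h2.trans h1
    · intro h
      refine ContinuousLinearMap.opNorm_le_bound _ zero_le_one fun f => ?_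
      rw [one_mul]
      refine lp.norm_mono (by norm_num) fun s => ?_
      rw [hsum]
      simpa using ContinuousLinearMap.le_of_opNorm_le _ (h s) (f s)
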